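/- Let s ∈ (0,1), r ∈ [0, 4−2s] and λ_min > 0. There exists a constant C = C(r, s, λ_min) > 0 with the following property. Let Δt ∈ (0,1), let N be a positive integer with T := NΔt > (1/λ_min)·log(Δt^{−(r/2+s)}), let (λ_m)_{m≥1} be a sequence of reals with λ_m ≥ λ_min for all m, and let (c_m)_{m≥1} be a sequence of reals with Σ_m λ_m^r c_m² < ∞. Then Σ_{m} c_m² · (λ_m^{−s} − (1/Γ(s)) ∫_0^T I_r[t ↦ e^{−λ_m t}](t) t^{s−1} dt)² ≤ C · Δt^{r+2s} · Σ_m λ_m^r c_m², where I_r denotes: the piecewise-constant interpolant if r ∈ [0, 2−2s], the modified interpolant if r ∈ (2−2s, 2), and the piecewise-linear interpolant if r ∈ [2, 4−2s]. -/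

import Mathlib

open Real MeasureTheory intervalIntegral

/-- The piecewise-constant interpolant of `φ` on the uniform grid `t_j = jΔt`:
`I[φ](t) = φ(t_j)` for `t ∈ [t_j, t_{j+1})`. -/
noncomputable def pcInterp (Δt : ℝ) (φ : ℝ → ℝ) (t : ℝ) : ℝ :=
  φ ((⌊t / Δt⌋₊ : ℝ) * Δt)

/-- The piecewise-linear interpolant of `φ` on the uniform grid `t_j = jΔt`:
`I[φ](t) = ((t_{j+1}−t)/Δt)·φ(t_j) + ((t−t_j)/Δt)·φ(t_{j+1})` for `t ∈ [t_j, t_{j+1})`. -/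
noncomputable def plInterp (Δt : ℝ) (φ : ℝ → ℝ) (t : ℝ) : ℝ :=
  ((((⌊t / Δt⌋₊ : ℝ) + 1) * Δt - t) / Δt) * φ ((⌊t / Δt⌋₊ : ℝ) * Δt) +
    ((t - (⌊t / Δt⌋₊ : ℝ) * Δt) / Δt) * φ (((⌊t / Δt⌋₊ : ℝ) + 1) * Δt)

/-- The modified interpolant: `I[φ](t) = φ(t_1)` on `[t_0, t_1)`, and the
piecewise-linear interpolant on `[t_j, t_{j+1})` for `j ≥ 1`. -/
noncomputable def modInterp (Δt : ℝ) (φ : ℝ → ℝ) (t : ℝ) : ℝ :=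
  if t < Δt then φ Δt else plInterp Δt φ t

/-- The interpolant `I_r`: piecewise constant for `r ∈ [0, 2−2s]`, modified for
`r ∈ (2−2s, 2)`, and piecewise linear for `r ∈ [2, 4−2s]`. -/
noncomputable def interpR (r s Δt : ℝ) (φ : ℝ → ℝ) : ℝ → ℝ :=
  if r ≤ 2 - 2 * s then pcInterp Δt φ
  else if r < 2 then modInterp Δt φ
  else plInterp Δt φ

lemma aux_pow {h a k X : ℝ} (hh : 0 < h) (ha : 0 ≤ a) (hak : a ≤ k) (h1 : X ≤ 1)
    (h2 : X ≤ h ^ k) : X ≤ h ^ a := by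
  rcases le_total h 1 with h' | h'
  · exact h2.trans (Real.rpow_le_rpow_of_exponent_ge hh h' hak)
  · exact h1.trans (Real.one_le_rpow h' ha)

lemma aux_one {h x : ℝ} (hx : 0 ≤ x) (hxh : x ≤ h) (hh : 0 < h) {a : ℝ} (ha : 0 ≤ a)
    (ha1 : a ≤ 1) : |1 - Real.exp (-x)| ≤ h ^ a := by
  have e1 : Real.exp (-x) ≤ 1 := Real.exp_le_one_iff.2 (by linarith)
  have e2 := Real.exp_pos (-x)
  have e3 := Real.add_one_le_exp (-x)
  rw [abs_of_nonneg (by linarith)]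
  refine aux_pow hh ha ha1 (by linarith) ?_
  rw [Real.rpow_one]; linarith

lemma aux_two {h θ : ℝ} (h0 : 0 ≤ θ) (h1 : θ ≤ 1) (hh : 0 < h) {a : ℝ} (ha : 0 ≤ a)
    (ha2 : a ≤ 2) :
    |(1 - θ) + θ * Real.exp (-h) - Real.exp (-(θ * h))| ≤ h ^ a := by
  have p0 : 0 ≤ θ * h := by positivity
  have e1 : Real.exp (-h) ≤ 1 := Real.exp_le_one_iff.2 (by linarith)
  have e2 := Real.exp_pos (-h)
  have f1 : Real.exp (-(θ * h)) ≤ 1 := Real.exp_le_one_iff.2 (by linarith)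
  have f2 := Real.exp_pos (-(θ * h))
  have g1 : θ * Real.exp (-h) ≤ θ := by nlinarith
  have g2 : 0 ≤ θ * Real.exp (-h) := by positivity
  have b1 : |(1 - θ) + θ * Real.exp (-h) - Real.exp (-(θ * h))| ≤ 1 := by
    rw [abs_le]; constructor <;> linarith
  refine aux_pow hh ha ha2 b1 ?_
  rw [Real.rpow_two]
  rcases le_total h 1 with h' | h'
  · have q : θ * h ≤ h := by nlinarith
    have u := Real.abs_exp_sub_one_sub_id_le (x := -h) (by rw [abs_neg, abs_of_pos hh]; exact h')
    have v := Real.abs_exp_sub_one_sub_id_le (x := -(θ * h))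
      (by rw [abs_neg, abs_of_nonneg p0]; linarith)
    rw [abs_le] at u v
    have u0 := Real.add_one_le_exp (-h)
    have v0 := Real.add_one_le_exp (-(θ * h))
    have q2 : (θ * h) ^ 2 ≤ h ^ 2 := by gcongr
    have w1 := mul_le_mul_of_nonneg_left u.2 h0
    have w2 := mul_le_mul_of_nonneg_left u0 h0
    have w3 : θ * (-h) ^ 2 ≤ h ^ 2 := by nlinarith [sq_nonneg h]
    rw [abs_le]; constructor <;> nlinarith
  · exact b1.trans (by nlinarith)

lemma floor_bds {d t : ℝ} (hd : 0 < d) (ht : 0 ≤ t) :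
    (⌊t / d⌋₊ : ℝ) * d ≤ t ∧ t < ((⌊t / d⌋₊ : ℝ) + 1) * d := by
  constructor
  · rw [← le_div_iff₀ hd]; exact Nat.floor_le (by positivity)
  · rw [← div_lt_iff₀ hd]; exact Nat.lt_floor_add_one _

lemma pc_err {l d t a : ℝ} (hl : 0 < l) (hd : 0 < d) (ht : 0 ≤ t) (ha : 0 ≤ a) (ha1 : a ≤ 1) :
    |pcInterp d (fun u => Real.exp (-l * u)) t - Real.exp (-l * t)| ≤
      (l * d) ^ a * Real.exp (-l * ((⌊t / d⌋₊ : ℝ) * d)) := by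
  obtain ⟨b1, b2⟩ := floor_bds hd ht
  unfold pcInterp
  set τ := (⌊t / d⌋₊ : ℝ) * d with hτ
  have e : Real.exp (-l * t) = Real.exp (-l * τ) * Real.exp (-(l * (t - τ))) := by
    rw [← Real.exp_add]; ring_nf
  have := aux_one (h := l * d) (x := l * (t - τ)) (mul_nonneg hl.le (by linarith))
    (mul_le_mul_of_nonneg_left (by linarith) hl.le) (by positivity) ha ha1
  dsimp only
  rw [e, ← mul_one_sub, abs_mul, abs_of_pos (Real.exp_pos _), mul_comm]
  gcongr

lemma pl_err {l d t a : ℝ} (hl : 0 < l) (hd : 0 < d) (ht : 0 ≤ t) (ha : 0 ≤ a) (ha1 : a ≤ 2) :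
    |plInterp d (fun u => Real.exp (-l * u)) t - Real.exp (-l * t)| ≤
      (l * d) ^ a * Real.exp (-l * ((⌊t / d⌋₊ : ℝ) * d)) := by
  obtain ⟨b1, b2⟩ := floor_bds hd ht
  unfold plInterp
  set n := (⌊t / d⌋₊ : ℝ) with hn
  obtain ⟨θ, hθ⟩ : ∃ θ, θ = (t - n * d) / d := ⟨_, rfl⟩
  have hθd : θ * d = t - n * d := by rw [hθ]; field_simp
  have e : Real.exp (-l * t) = Real.exp (-l * (n * d)) * Real.exp (-(θ * (l * d))) := by
    rw [← Real.exp_add]; congr 1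
    linear_combination (l) * hθd
  have e' : Real.exp (-l * ((n + 1) * d)) = Real.exp (-l * (n * d)) * Real.exp (-(l * d)) := by
    rw [← Real.exp_add]; ring_nf
  have e'' : ((n + 1) * d - t) / d = 1 - θ := by rw [hθ]; field_simp; ring
  have := aux_two (h := l * d) (θ := θ) (by rw [hθ]; apply div_nonneg <;> linarith)
    (by rw [hθ, div_le_one hd]; linarith) (by positivity) ha ha1
  dsimp only
  rw [← hθ, e, e', e'']
  rw [show (1 - θ) * Real.exp (-l * (n * d)) + θ * (Real.exp (-l * (n * d)) * Real.exp (-(l * d))) -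
    Real.exp (-l * (n * d)) * Real.exp (-(θ * (l * d))) = Real.exp (-l * (n * d)) *
    ((1 - θ) + θ * Real.exp (-(l * d)) - Real.exp (-(θ * (l * d)))) by ring,
    abs_mul, abs_of_pos (Real.exp_pos _), mul_comm]
  gcongr

lemma floor_exp {l d t : ℝ} (hl : 0 < l) (hd : 0 < d) (ht : d ≤ t) :
    Real.exp (-l * ((⌊t / d⌋₊ : ℝ) * d)) ≤ Real.exp (-(l / 2 * t)) := by
  obtain ⟨b1, b2⟩ := floor_bds hd (hd.le.trans ht)
  have h1 : (1 : ℝ) ≤ (⌊t / d⌋₊ : ℝ) := by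
    exact_mod_cast (Nat.one_le_floor_iff _).2 ((one_le_div hd).2 ht)
  apply Real.exp_le_exp.2
  have : t ≤ 2 * ((⌊t / d⌋₊ : ℝ) * d) := by nlinarith
  nlinarith

lemma interp_err_big {s r l d t : ℝ} (hs : s ∈ Set.Ioo (0:ℝ) 1)
    (hr : r ∈ Set.Icc (0:ℝ) (4 - 2 * s)) (hl : 0 < l) (hd : 0 < d) (ht : d ≤ t) :
    |interpR r s d (fun u => Real.exp (-l * u)) t - Real.exp (-l * t)| ≤
      (l * d) ^ (r / 2 + s) * Real.exp (-(l / 2 * t)) := by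
  obtain ⟨s0, s1⟩ := hs
  obtain ⟨r0, r1⟩ := hr
  have key := mul_le_mul_of_nonneg_left (floor_exp hl hd ht)
    (Real.rpow_nonneg (mul_pos hl hd).le (r / 2 + s))
  refine le_trans ?_ key
  unfold interpR
  split_ifs with h1 h2
  · exact pc_err hl hd (hd.le.trans ht) (by linarith) (by linarith)
  · unfold modInterp
    rw [if_neg (not_lt.2 ht)]
    exact pl_err hl hd (hd.le.trans ht) (by linarith) (by linarith)
  · exact pl_err hl hd (hd.le.trans ht) (by linarith) (by linarith)

lemma interp_err_small {s r l d t : ℝ} (hs : s ∈ Set.Ioo (0:ℝ) 1)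
    (hr : r ∈ Set.Icc (0:ℝ) (4 - 2 * s)) (hl : 0 < l) (hd : 0 < d) (ht0 : 0 ≤ t) (ht : t < d) :
    |interpR r s d (fun u => Real.exp (-l * u)) t - Real.exp (-l * t)| ≤
      (l * d) ^ (r / 2) := by
  obtain ⟨s0, s1⟩ := hs
  obtain ⟨r0, r1⟩ := hr
  have key : (l * d) ^ (r / 2) * Real.exp (-l * ((⌊t / d⌋₊ : ℝ) * d)) ≤ (l * d) ^ (r / 2) := by
    apply mul_le_of_le_one_right (by positivity)
    apply Real.exp_le_one_iff.2
    have : 0 ≤ l * ((⌊t / d⌋₊ : ℝ) * d) := by positivity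
    linarith
  unfold interpR
  split_ifs with h1 h2
  · exact (pc_err hl hd ht0 (by linarith) (by linarith)).trans key
  · unfold modInterp
    rw [if_pos ht]
    have e : Real.exp (-l * d) = Real.exp (-l * t) * Real.exp (-(l * (d - t))) := by
      rw [← Real.exp_add]; ring_nf
    have := aux_one (h := l * d) (x := l * (d - t)) (mul_nonneg hl.le (by linarith))
      (mul_le_mul_of_nonneg_left (by linarith) hl.le) (by positivity)
      (a := r / 2) (by linarith) (by linarith)
    dsimp only
    rw [abs_sub_comm, e, ← mul_one_sub, abs_mul, abs_of_pos (Real.exp_pos _)]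
    refine le_trans (mul_le_of_le_one_left (abs_nonneg _) ?_) this
    apply Real.exp_le_one_iff.2
    nlinarith
  · exact (pl_err hl hd ht0 (by linarith) (by linarith)).trans key

lemma interp_meas (s r l d : ℝ) :
    Measurable (interpR r s d (fun u => Real.exp (-l * u))) := by
  have hf : Measurable (fun t : ℝ => (⌊t / d⌋₊ : ℝ)) :=
    measurable_from_nat.comp (Nat.measurable_floor.comp (measurable_id.div_const d))
  have hpl : Measurable (plInterp d (fun u => Real.exp (-l * u))) := by
    unfold plInterp
    fun_prop
  unfold interpR
  split_ifs
  · unfold pcInterp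
    fun_prop
  · unfold modInterp
    exact Measurable.ite measurableSet_Iio measurable_const hpl
  · exact hpl

lemma w_int {s l : ℝ} (hs : 0 < s) (hl : 0 < l) :
    IntegrableOn (fun t : ℝ => t ^ (s - 1) * Real.exp (-(l * t))) (Set.Ioi 0) := by
  have := integrableOn_rpow_mul_exp_neg_mul_rpow (p := 1) (s := s - 1) (b := l)
    (by linarith) one_pos hl
  simpa using this

lemma tail_bound {s l T : ℝ} (hs : 0 < s) (hs1 : s < 1) (hl : 0 < l) (hT : 0 ≤ T) :
    ∫ t in Set.Ioi T, t ^ (s - 1) * Real.exp (-(l * t)) ≤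
      Real.exp (-(l * T)) * (l ^ (-s) * Real.Gamma s) := by
  have hmp : MeasurePreserving (fun x : ℝ => x + T) volume volume :=
    measurePreserving_add_right volume T
  have hme : MeasurableEmbedding (fun x : ℝ => x + T) := measurableEmbedding_addRight T
  have hpre : (fun x : ℝ => x + T) ⁻¹' Set.Ioi T = Set.Ioi 0 := by
    ext x; simp
  have h1 := hmp.setIntegral_preimage_emb hme
    (fun t : ℝ => t ^ (s - 1) * Real.exp (-(l * t))) (Set.Ioi T)
  rw [hpre] at h1
  rw [← h1]
  have h2 := Real.integral_rpow_mul_exp_neg_mul_Ioi hs hl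
  have h3 : l ^ (-s) * Real.Gamma s = ∫ t in Set.Ioi 0, t ^ (s - 1) * Real.exp (-(l * t)) := by
    rw [h2, one_div, Real.inv_rpow hl.le, Real.rpow_neg hl.le]
  rw [h3, ← MeasureTheory.integral_const_mul]
  apply integral_mono_of_nonneg
  · filter_upwards [ae_restrict_mem measurableSet_Ioi] with t ht
    have ht : 0 < t := ht
    simp only [Pi.zero_apply]
    positivity
  · exact (w_int hs hl).const_mul _
  · filter_upwards [ae_restrict_mem measurableSet_Ioi] with t ht
    have ht : 0 < t := ht
    have e : Real.exp (-(l * (t + T))) = Real.exp (-(l * T)) * Real.exp (-(l * t)) := by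
      rw [← Real.exp_add]; ring_nf
    have : (t + T) ^ (s - 1) ≤ t ^ (s - 1) :=
      Real.rpow_le_rpow_of_nonpos ht (by linarith) (by linarith)
    rw [e, mul_left_comm]
    gcongr

lemma quad_bound {s r l d T : ℝ} (hs : s ∈ Set.Ioo (0:ℝ) 1)
    (hr : r ∈ Set.Icc (0:ℝ) (4 - 2 * s)) (hl : 0 < l) (hd : 0 < d) (hT : 0 ≤ T) :
    IntervalIntegrable (fun t => (interpR r s d (fun u => Real.exp (-l * u)) t - Real.exp (-l * t))
      * t ^ (s - 1)) volume 0 T ∧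
    |∫ t in (0:ℝ)..T, (interpR r s d (fun u => Real.exp (-l * u)) t - Real.exp (-l * t))
      * t ^ (s - 1)| ≤
    l ^ (r / 2) * d ^ (r / 2 + s) * (1 / s + 2 ^ s * Real.Gamma s) := by
  have s0 := hs.1
  have s1 := hs.2
  set D : ℝ → ℝ := fun t => (interpR r s d (fun u => Real.exp (-l * u)) t - Real.exp (-l * t))
      * t ^ (s - 1) with hD
  have hDm : Measurable D := by
    have := interp_meas s r l d
    rw [hD]
    fun_prop
  set B1 : ℝ → ℝ := (Set.Ioc 0 d).indicator (fun t => (l * d) ^ (r / 2) * t ^ (s - 1)) with hB1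
  set B2 : ℝ → ℝ := fun t => (l * d) ^ (r / 2 + s) * (t ^ (s - 1) * Real.exp (-(l / 2 * t))) with hB2
  have hI1' : IntegrableOn (fun t : ℝ => (l * d) ^ (r / 2) * t ^ (s - 1)) (Set.Ioc 0 d) := by
    have := (intervalIntegral.intervalIntegrable_rpow' (a := 0) (b := d) (r := s - 1)
      (by linarith)).const_mul ((l * d) ^ (r / 2))
    rwa [intervalIntegrable_iff_integrableOn_Ioc_of_le hd.le] at this
  have hI1 : Integrable B1 := hI1'.integrable_indicator measurableSet_Ioc
  have hI2 : IntegrableOn B2 (Set.Ioi 0) := (w_int s0 (half_pos hl)).const_mul _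
  have hI : IntegrableOn (fun t => B1 t + B2 t) (Set.Ioi 0) := hI1.integrableOn.add hI2
  have hB : ∀ t ∈ Set.Ioi (0:ℝ), ‖D t‖ ≤ B1 t + B2 t := by
    intro t ht
    have ht : 0 < t := ht
    have hp : 0 < t ^ (s - 1) := by positivity
    have n1 : 0 ≤ B1 t := Set.indicator_nonneg (fun x hx => by
      have : 0 < x := hx.1
      positivity) t
    have n2 : 0 ≤ B2 t := by rw [hB2]; positivity
    rw [Real.norm_eq_abs, hD]
    dsimp only
    rw [abs_mul, abs_of_pos hp]
    rcases lt_or_ge t d with h | h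
    · have e : B1 t = (l * d) ^ (r / 2) * t ^ (s - 1) :=
        Set.indicator_of_mem (show t ∈ Set.Ioc 0 d from ⟨ht, h.le⟩) _
      have := mul_le_mul_of_nonneg_right (interp_err_small hs hr hl hd ht.le h) hp.le
      linarith
    · have := mul_le_mul_of_nonneg_right (interp_err_big hs hr hl hd h) hp.le
      have e : B2 t = (l * d) ^ (r / 2 + s) * Real.exp (-(l / 2 * t)) * t ^ (s - 1) := by
        rw [hB2]; ring
      linarith
  have hDI : IntegrableOn D (Set.Ioi 0) := by
    refine Integrable.mono' hI hDm.aestronglyMeasurable ?_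
    filter_upwards [ae_restrict_mem measurableSet_Ioi] with t ht using hB t ht
  refine ⟨?_, ?_⟩
  · rw [intervalIntegrable_iff_integrableOn_Ioc_of_le hT]
    exact hDI.mono_set Set.Ioc_subset_Ioi_self
  · rw [intervalIntegral.integral_of_le hT]
    have c1 : ∫ t in Set.Ioi (0:ℝ), B1 t = (l * d) ^ (r / 2) * (d ^ s / s) := by
      rw [hB1, setIntegral_indicator measurableSet_Ioc,
        Set.inter_eq_right.2 Set.Ioc_subset_Ioi_self,
        ← intervalIntegral.integral_of_le hd.le, intervalIntegral.integral_const_mul,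
        integral_rpow (Or.inl (by linarith))]
      rw [sub_add_cancel, Real.zero_rpow s0.ne', sub_zero]
    have c2 : ∫ t in Set.Ioi (0:ℝ), B2 t =
        (l * d) ^ (r / 2 + s) * ((1 / (l / 2)) ^ s * Real.Gamma s) := by
      rw [hB2, MeasureTheory.integral_const_mul,
        Real.integral_rpow_mul_exp_neg_mul_Ioi s0 (half_pos hl)]
    calc |∫ t in Set.Ioc 0 T, D t| ≤ ∫ t in Set.Ioc 0 T, ‖D t‖ :=
          MeasureTheory.norm_integral_le_integral_norm D
      _ ≤ ∫ t in Set.Ioi 0, ‖D t‖ := by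
          apply setIntegral_mono_set hDI.norm
          · exact Filter.Eventually.of_forall fun t => norm_nonneg _
          · exact (Set.Ioc_subset_Ioi_self).eventuallyLE
      _ ≤ ∫ t in Set.Ioi 0, (B1 t + B2 t) :=
          setIntegral_mono_on hDI.norm hI measurableSet_Ioi hB
      _ = (l * d) ^ (r / 2) * (d ^ s / s) +
          (l * d) ^ (r / 2 + s) * ((1 / (l / 2)) ^ s * Real.Gamma s) := by
          rw [integral_add hI1.integrableOn hI2, c1, c2]
      _ = _ := by
          rw [one_div_div, Real.div_rpow (by norm_num) hl.le, Real.mul_rpow hl.le hd.le,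
            Real.mul_rpow hl.le hd.le, Real.rpow_add hd, Real.rpow_add hl]
          have : l ^ s ≠ 0 := by positivity
          field_simp

lemma main_bound {s r lamMin l d : ℝ} (hs : s ∈ Set.Ioo (0:ℝ) 1)
    (hr : r ∈ Set.Icc (0:ℝ) (4 - 2 * s)) (hlm : 0 < lamMin) (hd : d ∈ Set.Ioo (0:ℝ) 1)
    {T : ℝ} (hT : 0 < T) (h : (1 / lamMin) * Real.log (d ^ (-(r / 2 + s))) < T)
    (hl : lamMin ≤ l) :
    |l ^ (-s) - (1 / Real.Gamma s) *
            ∫ t in (0:ℝ)..T, interpR r s d (fun u => Real.exp (-l * u)) t * t ^ (s - 1)| ≤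
     (1 / Real.Gamma s * (1 / s + 2 ^ s * Real.Gamma s) + lamMin ^ (-(r / 2 + s))) *
       (l ^ (r / 2) * d ^ (r / 2 + s)) := by
  obtain ⟨s0, s1⟩ := hs
  have r0 := hr.1
  have hl0 : 0 < l := hlm.trans_le hl
  have hd0 := hd.1
  have hG : 0 < Real.Gamma s := Real.Gamma_pos_of_pos s0
  obtain ⟨q1, q2⟩ := quad_bound ⟨s0, s1⟩ hr hl0 hd0 hT.le
  have hw := w_int s0 hl0
  have hwT : IntervalIntegrable (fun t : ℝ => t ^ (s - 1) * Real.exp (-(l * t))) volume 0 T := by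
    rw [intervalIntegrable_iff_integrableOn_Ioc_of_le hT.le]
    exact hw.mono_set Set.Ioc_subset_Ioi_self
  have e1 : ∫ t in (0:ℝ)..T, interpR r s d (fun u => Real.exp (-l * u)) t * t ^ (s - 1) =
      (∫ t in (0:ℝ)..T, (interpR r s d (fun u => Real.exp (-l * u)) t - Real.exp (-l * t))
      * t ^ (s - 1)) + ∫ t in (0:ℝ)..T, t ^ (s - 1) * Real.exp (-(l * t)) := by
    rw [← intervalIntegral.integral_add q1 hwT]
    congr 1
    funext t
    rw [neg_mul]; ring
  have e2 := integral_Ioi_sub_Ioi hw hT.le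
  have e3 : ∫ t in Set.Ioi 0, t ^ (s - 1) * Real.exp (-(l * t)) = l ^ (-s) * Real.Gamma s := by
    rw [Real.integral_rpow_mul_exp_neg_mul_Ioi s0 hl0, one_div, Real.inv_rpow hl0.le,
      Real.rpow_neg hl0.le]
  have tb := tail_bound s0 s1 hl0 hT.le
  have tn : 0 ≤ ∫ t in Set.Ioi T, t ^ (s - 1) * Real.exp (-(l * t)) := by
    apply setIntegral_nonneg measurableSet_Ioi
    intro t ht
    have : 0 < t := hT.trans ht
    positivity
  have ex : Real.exp (-(l * T)) ≤ d ^ (r / 2 + s) := by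
    rw [Real.rpow_def_of_pos hd0]
    apply Real.exp_le_exp.2
    rw [Real.log_rpow hd0, one_div, inv_mul_lt_iff₀ hlm] at h
    nlinarith
  have lb : l ^ (-s) ≤ lamMin ^ (-(r / 2 + s)) * l ^ (r / 2) := by
    have : l ^ (-s) = l ^ (-(r / 2 + s)) * l ^ (r / 2) := by
      rw [← Real.rpow_add hl0]; ring_nf
    rw [this]
    exact mul_le_mul_of_nonneg_right
      (Real.rpow_le_rpow_of_nonpos hlm hl (by linarith)) (by positivity)
  rw [e3] at e2
  rw [e1, ← e2]
  set A := ∫ t in (0:ℝ)..T, (interpR r s d (fun u => Real.exp (-l * u)) t - Real.exp (-l * t))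
      * t ^ (s - 1)
  set R := ∫ t in Set.Ioi T, t ^ (s - 1) * Real.exp (-(l * t))
  have e4 : l ^ (-s) - 1 / Real.Gamma s * (A + (l ^ (-s) * Real.Gamma s - R)) =
      1 / Real.Gamma s * R - 1 / Real.Gamma s * A := by
    field_simp; ring
  rw [e4]
  have t1 : |1 / Real.Gamma s * A| ≤ 1 / Real.Gamma s * (l ^ (r / 2) * d ^ (r / 2 + s) *
      (1 / s + 2 ^ s * Real.Gamma s)) := by
    rw [abs_mul, abs_of_pos (by positivity)]
    gcongr
  have t2 : |1 / Real.Gamma s * R| ≤ d ^ (r / 2 + s) * (lamMin ^ (-(r / 2 + s)) * l ^ (r / 2)) := by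
    rw [abs_of_nonneg (by positivity), one_div, inv_mul_le_iff₀ hG]
    refine tb.trans ?_
    calc _ ≤ d ^ (r / 2 + s) * (lamMin ^ (-(r / 2 + s)) * l ^ (r / 2) * Real.Gamma s) := by gcongr
      _ = _ := by ring
  refine (abs_sub _ _).trans ?_
  linarith

/-- Let `s ∈ (0,1)`, `r ∈ [0, 4−2s]` and `λ_min > 0`. There is
`C = C(r,s,λ_min) > 0` such that: for `Δt ∈ (0,1)`, `N ≥ 1` with
`T = NΔt > (1/λ_min) log(Δt^{−(r/2+s)})`, any sequence `λ_m ≥ λ_min` and any `(c_m)`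
with `Σ λ_m^r c_m² < ∞`, one has
`Σ_m c_m² (λ_m^{−s} − (1/Γ(s)) ∫_0^T I_r[e^{−λ_m ·}](t) t^{s−1} dt)²
  ≤ C Δt^{r+2s} Σ_m λ_m^r c_m²`. -/
theorem stmt11 (s r lamMin : ℝ) (hs : s ∈ Set.Ioo (0:ℝ) 1)
    (hr : r ∈ Set.Icc (0:ℝ) (4 - 2 * s)) (hlm : 0 < lamMin) :
    ∃ C : ℝ, 0 < C ∧ ∀ Δt : ℝ, Δt ∈ Set.Ioo (0:ℝ) 1 → ∀ N : ℕ, 0 < N →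
      (1 / lamMin) * Real.log (Δt ^ (-(r / 2 + s))) < (N:ℝ) * Δt →
      ∀ lam c : ℕ → ℝ, (∀ m, lamMin ≤ lam m) →
      Summable (fun m => lam m ^ r * (c m) ^ 2) →
      ∑' m, (c m) ^ 2 *
          (lam m ^ (-s) - (1 / Real.Gamma s) *
            ∫ t in (0:ℝ)..((N:ℝ) * Δt),
              interpR r s Δt (fun u => Real.exp (-(lam m) * u)) t * t ^ (s - 1)) ^ 2
        ≤ C * Δt ^ (r + 2 * s) * ∑' m, lam m ^ r * (c m) ^ 2 := by
  obtain ⟨s0, s1⟩ := hs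
  have hG : 0 < Real.Gamma s := Real.Gamma_pos_of_pos s0
  set K := 1 / Real.Gamma s * (1 / s + 2 ^ s * Real.Gamma s) + lamMin ^ (-(r / 2 + s)) with hK
  have hK0 : 0 < K := by positivity
  refine ⟨K ^ 2, by positivity, ?_⟩
  intro d hd N hN hT lam c hlam hsum
  have hd0 := hd.1
  have hT0 : 0 < (N : ℝ) * d := by positivity
  rw [← tsum_mul_left]
  have hb : ∀ m, (c m) ^ 2 *
          (lam m ^ (-s) - (1 / Real.Gamma s) *
            ∫ t in (0:ℝ)..((N:ℝ) * d),
              interpR r s d (fun u => Real.exp (-(lam m) * u)) t * t ^ (s - 1)) ^ 2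
        ≤ K ^ 2 * d ^ (r + 2 * s) * (lam m ^ r * (c m) ^ 2) := by
    intro m
    have hl0 : 0 < lam m := hlm.trans_le (hlam m)
    have := main_bound ⟨s0, s1⟩ hr hlm hd hT0 hT (hlam m)
    rw [← hK] at this
    have h2 := pow_le_pow_left₀ (abs_nonneg _) this 2
    rw [sq_abs] at h2
    refine (mul_le_mul_of_nonneg_left h2 (sq_nonneg _)).trans (le_of_eq ?_)
    have a1 : lam m ^ r = (lam m ^ (r / 2)) ^ 2 := by
      rw [← Real.rpow_mul_natCast hl0.le]; congr 1; push_cast; ring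
    have a2 : d ^ (r + 2 * s) = (d ^ (r / 2 + s)) ^ 2 := by
      rw [← Real.rpow_mul_natCast hd0.le]; congr 1; push_cast; ring
    rw [a1, a2]; ring
  have hs2 := hsum.mul_left (K ^ 2 * d ^ (r + 2 * s))
  refine Summable.tsum_le_tsum hb (Summable.of_nonneg_of_le (fun m => by positivity) hb hs2) hs2
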